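/- arXiv:1902.07319 — 3 statements merged into one kernel-verified Lean document; each statement's English description precedes it below -/
import Mathlib

section
/- Let h : [0,∞) → ℝ be continuously differentiable with h(0)=0, h'(ρ)>0 for ρ>0, and lim_{ρ→∞} h'(ρ)/ρ^{γ−1} = a for some constants a > 0 and γ ≥ 1, and set H(ρ) = ρ ∫₁^ρ h(z)/z² dz for ρ > 0, H(0)=0. Let K ⊂ (0,∞) be compact and choose 0 < r₁ < (1/2)·inf K and r₂ > 2·sup K. Then there exists a constant c > 0 such that for all r ∈ K and all ρ ≥ 0: if r₁ ≤ ρ ≤ r₂ then H(ρ) − H(r) − H'(r)(ρ − r) ≥ c·(ρ − r)², and if ρ < r₁ or ρ > r₂ then H(ρ) − H(r) − H'(r)(ρ − r) ≥ c·(1 + ρ^γ). -/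
/-!
Write `P ρ = ∫₁^ρ h(z)/z² dz + h(ρ)/ρ`. On `(0,∞)` one has `H' = P` and `P' = h'(ρ)/ρ > 0`, so `H`
is convex and every relative energy is nonnegative. Writing `E(ρ, r)` for the relative energy, the
three-point identity `E(ρ, r) = E(ρ, s) + E(s, r) + (P s - P r)(ρ - s)` then gives
`E(ρ, r) ≥ (P s - P r)(ρ - s)` for every `s > 0` (`relEnergy_ge`).

The growth condition and compactness give `b > 0` with `h'(z) ≥ b z^(γ-1)` for `z ≥ r₁`
(`exists_growth_bound`), whence by the mean value theorem `P v - P u ≥ b u^(γ-1) / v * (v - u)` for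
`r₁ ≤ u ≤ v` (`potDeriv_sub_ge`). The three regimes follow by the choice of the intermediate point:
`s = (r + ρ)/2` for `r₁ ≤ ρ ≤ r₂`, `s = 3r₁/2` for `ρ < r₁`, and `s = 3ρ/4` for `ρ > r₂`.
-/

open Set Filter MeasureTheory Topology

/-- The derivative of the pressure potential of `h` on `(0,∞)`. -/
noncomputable def potDeriv (h : ℝ → ℝ) (ρ : ℝ) : ℝ := (∫ z in (1:ℝ)..ρ, h z / z ^ 2) + h ρ / ρ

lemma hasDerivAt_of_contDiffOn {h : ℝ → ℝ} (hC1 : ContDiffOn ℝ 1 h (Set.Ici 0)) {r : ℝ}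
    (hr : 0 < r) : HasDerivAt h (deriv h r) r :=
  ((hC1.differentiableOn one_ne_zero).differentiableAt (Ici_mem_nhds hr)).hasDerivAt

lemma hasDerivAt_integral {h : ℝ → ℝ} (hC1 : ContDiffOn ℝ 1 h (Set.Ici 0)) {r : ℝ}
    (hr : 0 < r) : HasDerivAt (fun ρ => ∫ z in (1:ℝ)..ρ, h z / z ^ 2) (h r / r ^ 2) r := by
  have hc : ContinuousOn (fun z : ℝ => h z / z ^ 2) (Set.Ioi 0) :=
    (hC1.continuousOn.mono Set.Ioi_subset_Ici_self).div (by fun_prop)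
      (fun x hx => pow_ne_zero 2 (ne_of_gt hx))
  apply intervalIntegral.integral_hasDerivAt_right
  · apply ContinuousOn.intervalIntegrable
    apply hc.mono
    intro z hz
    exact lt_of_lt_of_le (lt_min one_pos hr) hz.1
  · exact hc.stronglyMeasurableAtFilter isOpen_Ioi r hr
  · exact hc.continuousAt (Ioi_mem_nhds hr)

lemma hasDerivAt_pot {h H : ℝ → ℝ} (hC1 : ContDiffOn ℝ 1 h (Set.Ici 0))
    (hH : ∀ ρ : ℝ, H ρ = ρ * ∫ z in (1:ℝ)..ρ, h z / z ^ 2) {r : ℝ} (hr : 0 < r) :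
    HasDerivAt H (potDeriv h r) r := by
  have h1 := (hasDerivAt_id r).mul (hasDerivAt_integral hC1 hr)
  have h2 : H = id * fun ρ => ∫ z in (1:ℝ)..ρ, h z / z ^ 2 := by
    funext ρ; simp [hH]
  rw [h2]
  refine h1.congr_deriv ?_
  simp only [potDeriv, id]
  field_simp

lemma hasDerivAt_potDeriv {h : ℝ → ℝ} (hC1 : ContDiffOn ℝ 1 h (Set.Ici 0)) {r : ℝ} (hr : 0 < r) :
    HasDerivAt (potDeriv h) (deriv h r / r) r := by
  have h1 := (hasDerivAt_integral hC1 hr).add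
    ((hasDerivAt_of_contDiffOn hC1 hr).div (hasDerivAt_id r) hr.ne')
  refine HasDerivAt.congr_deriv (f := potDeriv h) h1 ?_
  simp only [id]
  field_simp
  ring

lemma potDeriv_monotoneOn {h : ℝ → ℝ} (hC1 : ContDiffOn ℝ 1 h (Set.Ici 0))
    (hpos : ∀ ρ : ℝ, 0 < ρ → 0 < deriv h ρ) : MonotoneOn (potDeriv h) (Set.Ioi 0) := by
  apply monotoneOn_of_deriv_nonneg (convex_Ioi 0)
  · exact fun x hx => (hasDerivAt_potDeriv hC1 hx).continuousAt.continuousWithinAt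
  · rw [interior_Ioi]
    exact fun x hx => (hasDerivAt_potDeriv hC1 hx).differentiableAt.differentiableWithinAt
  · rw [interior_Ioi]
    intro x hx
    rw [(hasDerivAt_potDeriv hC1 hx).deriv]
    exact (div_pos (hpos x hx) hx).le

/-- At `ρ = 0` the relative energy equals `h s`; for `ρ > 0` this is convexity of `H`. -/
lemma relEnergy_nonneg {h H : ℝ → ℝ} (hC1 : ContDiffOn ℝ 1 h (Set.Ici 0)) (h0 : h 0 = 0)
    (hpos : ∀ ρ : ℝ, 0 < ρ → 0 < deriv h ρ)
    (hH : ∀ ρ : ℝ, H ρ = ρ * ∫ z in (1:ℝ)..ρ, h z / z ^ 2) {ρ s : ℝ} (hρ : 0 ≤ ρ) (hs : 0 < s) :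
    0 ≤ H ρ - H s - potDeriv h s * (ρ - s) := by
  have hmono := potDeriv_monotoneOn hC1 hpos
  rcases hρ.eq_or_lt with rfl | hρ
  · have hh : StrictMonoOn h (Set.Ici 0) := by
      apply strictMonoOn_of_deriv_pos (convex_Ici 0) hC1.continuousOn
      rw [interior_Ici]
      exact hpos
    have h1 : h 0 < h s := hh Set.self_mem_Ici hs.le hs
    rw [hH, hH, potDeriv]
    have h2 : h s / s * s = h s := div_mul_cancel₀ _ hs.ne'
    nlinarith
  · rcases lt_trichotomy ρ s with hlt | rfl | hlt
    · obtain ⟨ξ, hξ, he⟩ := exists_hasDerivAt_eq_slope H (potDeriv h) hlt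
        (fun x hx => (hasDerivAt_pot hC1 hH (hρ.trans_le hx.1)).continuousAt.continuousWithinAt)
        (fun x hx => hasDerivAt_pot hC1 hH (hρ.trans hx.1))
      rw [eq_div_iff (by linarith)] at he
      have := hmono (show ξ ∈ Set.Ioi 0 from hρ.trans hξ.1) hs hξ.2.le
      nlinarith
    · simp
    · obtain ⟨ξ, hξ, he⟩ := exists_hasDerivAt_eq_slope H (potDeriv h) hlt
        (fun x hx => (hasDerivAt_pot hC1 hH (hs.trans_le hx.1)).continuousAt.continuousWithinAt)
        (fun x hx => hasDerivAt_pot hC1 hH (hs.trans hx.1))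
      rw [eq_div_iff (by linarith)] at he
      have := hmono hs (show ξ ∈ Set.Ioi 0 from hs.trans hξ.1) hξ.1.le
      nlinarith

/-- Three-point identity, with the two relative energies through `s` discarded. -/
lemma relEnergy_ge {h H : ℝ → ℝ} (hC1 : ContDiffOn ℝ 1 h (Set.Ici 0)) (h0 : h 0 = 0)
    (hpos : ∀ ρ : ℝ, 0 < ρ → 0 < deriv h ρ)
    (hH : ∀ ρ : ℝ, H ρ = ρ * ∫ z in (1:ℝ)..ρ, h z / z ^ 2) {ρ r s : ℝ} (hρ : 0 ≤ ρ) (hr : 0 < r)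
    (hs : 0 < s) :
    (potDeriv h s - potDeriv h r) * (ρ - s) ≤ H ρ - H r - deriv H r * (ρ - r) := by
  have h1 := relEnergy_nonneg hC1 h0 hpos hH hρ hs
  have h2 := relEnergy_nonneg hC1 h0 hpos hH hs.le hr
  rw [(hasDerivAt_pot hC1 hH hr).deriv]
  linarith

/-- Near infinity the bound comes from the limit `a > 0`, and on the remaining compact interval
from continuity and positivity of `h'(z) / z^(γ-1)`. -/
lemma exists_growth_bound {h : ℝ → ℝ} (hC1 : ContDiffOn ℝ 1 h (Set.Ici 0))
    (hpos : ∀ ρ : ℝ, 0 < ρ → 0 < deriv h ρ) {a γ : ℝ} (ha : 0 < a)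
    (hlim : Filter.Tendsto (fun ρ : ℝ => deriv h ρ / ρ ^ (γ - 1)) Filter.atTop (nhds a))
    {r₁ : ℝ} (hr₁ : 0 < r₁) :
    ∃ b : ℝ, 0 < b ∧ ∀ z, r₁ ≤ z → b * z ^ (γ - 1) ≤ deriv h z := by
  have hev := hlim.eventually (lt_mem_nhds (half_lt_self ha))
  obtain ⟨M, hM⟩ := Filter.eventually_atTop.1 hev
  have hcd : ContinuousOn (deriv h) (Set.Ioi 0) :=
    (hC1.mono Set.Ioi_subset_Ici_self).continuousOn_deriv_of_isOpen isOpen_Ioi le_rfl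
  have hq : ContinuousOn (fun ρ : ℝ => deriv h ρ / ρ ^ (γ - 1)) (Set.Icc r₁ (max M r₁)) := by
    have hsub : Set.Icc r₁ (max M r₁) ⊆ Set.Ioi 0 := fun z hz => hr₁.trans_le hz.1
    refine (hcd.mono hsub).div ?_ (fun z hz => (Real.rpow_pos_of_pos (hsub hz) _).ne')
    exact continuousOn_id.rpow_const (fun z hz => Or.inl (ne_of_gt (hsub hz)))
  obtain ⟨x, hx, hmin⟩ := isCompact_Icc.exists_isMinOn
    (Set.nonempty_Icc.2 (le_max_right M r₁)) hq
  have hx0 : 0 < x := hr₁.trans_le hx.1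
  refine ⟨min (a / 2) (deriv h x / x ^ (γ - 1)),
    lt_min (half_pos ha) (div_pos (hpos x hx0) (Real.rpow_pos_of_pos hx0 _)), fun z hz => ?_⟩
  have hz0 : 0 < z := hr₁.trans_le hz
  rw [← le_div_iff₀ (Real.rpow_pos_of_pos hz0 _)]
  rcases le_total z (max M r₁) with hzM | hzM
  · exact (min_le_right _ _).trans (hmin ⟨hz, hzM⟩)
  · exact (min_le_left _ _).trans (hM z ((le_max_left _ _).trans hzM)).le

lemma potDeriv_sub_ge {h : ℝ → ℝ} (hC1 : ContDiffOn ℝ 1 h (Set.Ici 0)) {γ b r₁ : ℝ}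
    (hγ : 1 ≤ γ) (hb : 0 < b) (hr₁ : 0 < r₁)
    (hbd : ∀ z, r₁ ≤ z → b * z ^ (γ - 1) ≤ deriv h z) {u v : ℝ} (hu : r₁ ≤ u) (huv : u ≤ v) :
    b * u ^ (γ - 1) / v * (v - u) ≤ potDeriv h v - potDeriv h u := by
  have hu0 : 0 < u := hr₁.trans_le hu
  rcases huv.eq_or_lt with rfl | huv
  · simp
  obtain ⟨ξ, hξ, he⟩ := exists_hasDerivAt_eq_slope (potDeriv h) (fun x => deriv h x / x) huv
    (fun x hx => (hasDerivAt_potDeriv hC1 (hu0.trans_le hx.1)).continuousAt.continuousWithinAt)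
    (fun x hx => hasDerivAt_potDeriv hC1 (hu0.trans hx.1))
  have hξ0 : 0 < ξ := hu0.trans hξ.1
  rw [eq_div_iff (by linarith)] at he
  rw [← he]
  have h1 : u ^ (γ - 1) ≤ ξ ^ (γ - 1) :=
    Real.rpow_le_rpow hu0.le hξ.1.le (by linarith)
  have h2 : b * u ^ (γ - 1) ≤ deriv h ξ :=
    (mul_le_mul_of_nonneg_left h1 hb.le).trans (hbd ξ (hu.trans hξ.1.le))
  have h3 : 0 ≤ b * u ^ (γ - 1) := (mul_pos hb (Real.rpow_pos_of_pos hu0 _)).le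
  exact mul_le_mul_of_nonneg_right (div_le_div₀ (h3.trans h2) h2 hξ0 hξ.2.le) (by linarith)

/-- With `h` C¹, `h 0 = 0`, `h' > 0` on `(0,∞)`, `h' ρ / ρ^(γ-1) → a > 0`,
`γ ≥ 1`, `H` the pressure potential (with `H 0 = 0`), `K ⊆ (0,∞)` compact nonempty,
and `0 < r₁ < (1/2) inf K`, `r₂ > 2 sup K`, there is `c > 0` such that for all `r ∈ K`,
`ρ ≥ 0`: the relative energy dominates `c (ρ - r)²` for `r₁ ≤ ρ ≤ r₂` and dominates
`c (1 + ρ^γ)` otherwise. -/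
theorem stmt8 (h : ℝ → ℝ) (hC1 : ContDiffOn ℝ 1 h (Set.Ici 0)) (h0 : h 0 = 0)
    (hpos : ∀ ρ : ℝ, 0 < ρ → 0 < deriv h ρ)
    (a γ : ℝ) (ha : 0 < a) (hγ : 1 ≤ γ)
    (hlim : Filter.Tendsto (fun ρ : ℝ => deriv h ρ / ρ ^ (γ - 1)) Filter.atTop (nhds a))
    (H : ℝ → ℝ) (hH : ∀ ρ : ℝ, H ρ = ρ * ∫ z in (1:ℝ)..ρ, h z / z ^ 2)
    (K : Set ℝ) (hK : IsCompact K) (hKsub : K ⊆ Set.Ioi 0) (hKne : K.Nonempty)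
    (r₁ r₂ : ℝ) (hr₁pos : 0 < r₁) (hr₁ : r₁ < (1 / 2) * sInf K) (hr₂ : 2 * sSup K < r₂) :
    ∃ c : ℝ, 0 < c ∧ ∀ r ∈ K, ∀ ρ : ℝ, 0 ≤ ρ →
      (r₁ ≤ ρ → ρ ≤ r₂ →
        c * (ρ - r) ^ 2 ≤ H ρ - H r - deriv H r * (ρ - r)) ∧
      (ρ < r₁ ∨ r₂ < ρ →
        c * (1 + ρ ^ γ) ≤ H ρ - H r - deriv H r * (ρ - r)) := by
  obtain ⟨b, hb, hbd⟩ := exists_growth_bound hC1 hpos ha hlim hr₁pos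
  have hKb : ∀ r ∈ K, 2 * r₁ < r ∧ 2 * r < r₂ := fun r hr =>
    ⟨by linarith [csInf_le hK.bddBelow hr], by linarith [le_csSup hK.bddAbove hr]⟩
  obtain ⟨k, hk⟩ := hKne
  have hr₂pos : 0 < r₂ := by linarith [hKb k hk]
  set d := b * r₁ ^ (γ - 1) / r₂ with hd
  have hdpos : 0 < d := by positivity
  -- On `[r₁, r₂]` the slope of `P` is at least `d`.
  have hinc : ∀ u v, r₁ ≤ u → u ≤ v → v ≤ r₂ → d * (v - u) ≤ potDeriv h v - potDeriv h u := by
    intro u v hu huv hv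
    refine le_trans ?_ (potDeriv_sub_ge hC1 hγ hb hr₁pos hbd hu huv)
    have hv0 : 0 < v := by linarith
    have hpw : r₁ ^ (γ - 1) ≤ u ^ (γ - 1) := Real.rpow_le_rpow hr₁pos.le hu (by linarith)
    have hu0 : 0 ≤ u ^ (γ - 1) := Real.rpow_nonneg (by linarith) _
    apply mul_le_mul_of_nonneg_right _ (by linarith)
    exact div_le_div₀ (by positivity) (mul_le_mul_of_nonneg_left hpw hb.le) hv0 hv
  have hA1 : 0 < 1 + r₁ ^ γ := by positivity
  have hA2 : 0 < 1 + r₂ ^ γ := by positivity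
  set c₁ := d / 4 with hc₁
  set c₂ := d / 4 * r₁ ^ 2 / (1 + r₁ ^ γ) with hc₂
  set c₃ := b / 12 * (1 / 2) ^ (γ - 1) * r₂ ^ γ / (1 + r₂ ^ γ) with hc₃
  refine ⟨min c₁ (min c₂ c₃), lt_min (by positivity) (lt_min (by positivity) (by positivity)), ?_⟩
  intro r hr ρ hρ
  obtain ⟨hr1, hr2⟩ := hKb r hr
  have hr0 : 0 < r := by linarith
  have hE := fun {s : ℝ} (hs : 0 < s) => relEnergy_ge hC1 h0 hpos hH hρ hr0 hs
  constructor
  · intro h1 h2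
    refine le_trans ?_ (hE (s := (r + ρ) / 2) (by linarith))
    have hc : min c₁ (min c₂ c₃) ≤ d / 4 := min_le_left _ _
    refine (mul_le_mul_of_nonneg_right hc (sq_nonneg _)).trans ?_
    rcases le_total r ρ with hle | hle
    · have := hinc r ((r + ρ) / 2) (by linarith) (by linarith) (by linarith)
      nlinarith
    · have := hinc ((r + ρ) / 2) r (by linarith) (by linarith) (by linarith)
      nlinarith
  · rintro (h1 | h1)
    · refine le_trans ?_ (hE (s := 3 * r₁ / 2) (by linarith))
      have hc : min c₁ (min c₂ c₃) ≤ c₂ := (min_le_right _ _).trans (min_le_left _ _)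
      have hpw : 1 + ρ ^ γ ≤ 1 + r₁ ^ γ := by
        linarith [Real.rpow_le_rpow hρ h1.le (by linarith : (0:ℝ) ≤ γ)]
      have hi := hinc (3 * r₁ / 2) r (by linarith) (by linarith) (by linarith)
      have hc2 : 0 ≤ c₂ := by positivity
      calc min c₁ (min c₂ c₃) * (1 + ρ ^ γ) ≤ c₂ * (1 + r₁ ^ γ) :=
            mul_le_mul hc hpw (by positivity) hc2
        _ = d * (r₁ / 2) * (r₁ / 2) := by rw [hc₂]; field_simp; ring
        _ ≤ (potDeriv h r - potDeriv h (3 * r₁ / 2)) * (3 * r₁ / 2 - ρ) := by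
            have hi' : d * (r₁ / 2) ≤ potDeriv h r - potDeriv h (3 * r₁ / 2) := by nlinarith
            have hd0 : 0 ≤ d * (r₁ / 2) := by positivity
            exact mul_le_mul hi' (by linarith) (by positivity) (hd0.trans hi')
        _ = _ := by ring
    · have hρ0 : 0 < ρ := by linarith
      refine le_trans ?_ (hE (s := 3 * ρ / 4) (by linarith))
      have hc : min c₁ (min c₂ c₃) ≤ c₃ := (min_le_right _ _).trans (min_le_right _ _)
      -- Since `r < ρ / 2`, monotonicity of `P` replaces `r` by `ρ / 2`.
      have hm := potDeriv_monotoneOn hC1 hpos hr0 (half_pos hρ0) (by linarith : r ≤ ρ / 2)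
      have hi := potDeriv_sub_ge hC1 hγ hb hr₁pos hbd (u := ρ / 2) (v := 3 * ρ / 4)
        (by linarith) (by linarith)
      have hpw : r₂ ^ γ ≤ ρ ^ γ := Real.rpow_le_rpow hr₂pos.le h1.le (by linarith)
      have hsplit : ρ ^ γ = ρ ^ (γ - 1) * ρ := by
        rw [← Real.rpow_add_one hρ0.ne', sub_add_cancel]
      have hhalf : (ρ / 2) ^ (γ - 1) = (1 / 2) ^ (γ - 1) * ρ ^ (γ - 1) := by
        rw [← Real.mul_rpow (by norm_num) hρ0.le]; ring_nf
      calc min c₁ (min c₂ c₃) * (1 + ρ ^ γ) ≤ c₃ * (1 + ρ ^ γ) :=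
            mul_le_mul_of_nonneg_right hc (by positivity)
        _ ≤ b / 12 * (1 / 2) ^ (γ - 1) * ρ ^ γ := by
            rw [hc₃, div_mul_eq_mul_div, div_le_iff₀ hA2, mul_assoc _ (r₂ ^ γ), mul_assoc _ (ρ ^ γ)]
            apply mul_le_mul_of_nonneg_left _ (by positivity)
            linarith
        _ = b * (ρ / 2) ^ (γ - 1) / (3 * ρ / 4) * (3 * ρ / 4 - ρ / 2) * (ρ - 3 * ρ / 4) := by
            rw [hhalf, hsplit]; field_simp; ring
        _ ≤ (potDeriv h (3 * ρ / 4) - potDeriv h r) * (ρ - 3 * ρ / 4) :=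
            mul_le_mul_of_nonneg_right (by linarith) (by linarith)
end

section
/- Let h : [0,∞) → ℝ be continuously differentiable with h(0)=0, h'(ρ)>0 for ρ>0, and lim_{ρ→∞} h'(ρ)/ρ^{γ−1} = a for some constants a > 0 and γ ≥ 1, set H(ρ) = ρ ∫₁^ρ h(z)/z² dz for ρ > 0, H(0)=0, and let q : [0,∞) → ℝ be continuously differentiable with compact support contained in (0,∞). Then for every compact set K ⊂ (0,∞) there exists a constant C > 0 such that for all r ∈ K and all ρ ≥ 0: (q(ρ) − q(r))² ≤ C·(H(ρ) − H(r) − H'(r)(ρ − r)). -/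
/-!
Write `G ρ = ∫₁^ρ h z / z²`, so that `H = ρ G`, `H' = P := G + h / ρ` and `P' = h' / ρ > 0` on
`(0,∞)`: `H` is strictly convex there. Let `E(ρ|r) = H ρ - H r - H' r (ρ - r)`.

Choose `[α, β] ⊆ (0,∞)` containing `K` and the support of `q`, with `q = 0` at and beyond both
endpoints. On `[α, β]` the continuous function `h' / ρ` has a minimum `c > 0`, so
`E(ρ|r) ≥ c/2 (ρ - r)²`, which dominates `(q ρ - q r)²` because `q` is Lipschitz.
If `ρ` lies outside `[α, β]`, let `p` be the nearer endpoint. Then `q ρ = 0 = q p`, while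
`E(ρ|r) ≥ E(p|r)` because `E(·|r)` is decreasing left of `r` and increasing right of `r`.
The value `ρ = 0` is covered by `E(0|r) = h r` together with the monotonicity of `G`.
-/

open Set Filter MeasureTheory Topology

/-- A differentiable function with monotone derivative lies above its tangent lines. -/
lemma tangent_le (f f' : ℝ → ℝ) (s : Set ℝ) (hs : s.OrdConnected)
    (hf : ∀ x ∈ s, HasDerivAt f (f' x) x) (hm : MonotoneOn f' s)
    {x y : ℝ} (hx : x ∈ s) (hy : y ∈ s) : f x + f' x * (y - x) ≤ f y := by
  rcases lt_trichotomy x y with hxy | hxy | hxy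
  · have hsub := hs.out hx hy
    obtain ⟨z, hz, hzeq⟩ := exists_hasDerivAt_eq_slope f f' hxy
      (fun t ht => (hf t (hsub ht)).continuousAt.continuousWithinAt)
      (fun t ht => hf t (hsub (Ioo_subset_Icc_self ht)))
    have h1 := hm hx (hsub (Ioo_subset_Icc_self hz)) hz.1.le
    rw [eq_div_iff (by linarith)] at hzeq
    nlinarith
  · subst hxy; simp
  · have hsub := hs.out hy hx
    obtain ⟨z, hz, hzeq⟩ := exists_hasDerivAt_eq_slope f f' hxy
      (fun t ht => (hf t (hsub ht)).continuousAt.continuousWithinAt)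
      (fun t ht => hf t (hsub (Ioo_subset_Icc_self ht)))
    have h1 := hm (hsub (Ioo_subset_Icc_self hz)) hx hz.2.le
    rw [eq_div_iff (by linarith)] at hzeq
    nlinarith

/-- With `h` C¹, `h 0 = 0`, `h' > 0` on `(0,∞)`, `h' ρ / ρ^(γ-1) → a > 0`,
`γ ≥ 1`, `H` the pressure potential, and `q` C¹ with compact support contained in `(0,∞)`,
for every compact `K ⊆ (0,∞)` there is `C > 0` with
`(q ρ - q r)² ≤ C (H ρ - H r - H' r (ρ - r))` for all `r ∈ K`, `ρ ≥ 0`. -/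
theorem stmt10 (h : ℝ → ℝ) (hC1 : ContDiffOn ℝ 1 h (Set.Ici 0)) (h0 : h 0 = 0)
    (hpos : ∀ ρ : ℝ, 0 < ρ → 0 < deriv h ρ)
    (a γ : ℝ) (ha : 0 < a) (hγ : 1 ≤ γ)
    (hlim : Filter.Tendsto (fun ρ : ℝ => deriv h ρ / ρ ^ (γ - 1)) Filter.atTop (nhds a))
    (H : ℝ → ℝ) (hH : ∀ ρ : ℝ, H ρ = ρ * ∫ z in (1:ℝ)..ρ, h z / z ^ 2)
    (q : ℝ → ℝ) (hqC1 : ContDiff ℝ 1 q)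
    (hqsupp : HasCompactSupport q) (hqsub : tsupport q ⊆ Set.Ioi 0)
    (K : Set ℝ) (hK : IsCompact K) (hKsub : K ⊆ Set.Ioi 0) :
    ∃ C : ℝ, 0 < C ∧ ∀ r ∈ K, ∀ ρ : ℝ, 0 ≤ ρ →
      (q ρ - q r) ^ 2 ≤ C * (H ρ - H r - deriv H r * (ρ - r)) := by
  have hCo : ContDiffOn ℝ 1 h (Ioi 0) := hC1.mono Ioi_subset_Ici_self
  have hder : ∀ x : ℝ, 0 < x → HasDerivAt h (deriv h x) x := fun x hx =>
    ((hCo.differentiableOn one_ne_zero).differentiableAt (Ioi_mem_nhds hx)).hasDerivAt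
  have hdcont : ContinuousOn (deriv h) (Ioi 0) :=
    hCo.continuousOn_deriv_of_isOpen isOpen_Ioi le_rfl
  have hsm : StrictMonoOn h (Ici 0) :=
    strictMonoOn_of_deriv_pos (convex_Ici 0) hC1.continuousOn
      (fun x hx => hpos x (by simpa using hx))
  have hhpos : ∀ x : ℝ, 0 < x → 0 < h x := fun x hx => by
    simpa [h0] using hsm (self_mem_Ici) (mem_Ici.2 hx.le) hx
  have hgcont : ContinuousOn (fun z => h z / z ^ 2) (Ioi 0) :=
    hCo.continuousOn.div (by fun_prop) (fun x hx => pow_ne_zero _ (ne_of_gt hx))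
  set G : ℝ → ℝ := fun ρ => ∫ z in (1:ℝ)..ρ, h z / z ^ 2 with hGdef
  have hG : ∀ x : ℝ, 0 < x → HasDerivAt G (h x / x ^ 2) x := fun x hx =>
    intervalIntegral.integral_hasDerivAt_right
      ((hgcont.mono ((ordConnected_Ioi).uIcc_subset (mem_Ioi.2 one_pos) hx)).intervalIntegrable)
      (hgcont.stronglyMeasurableAtFilter isOpen_Ioi x hx)
      (hgcont.continuousAt (Ioi_mem_nhds hx))
  have hGmono : MonotoneOn G (Ioi 0) := by
    refine monotoneOn_of_deriv_nonneg (convex_Ioi 0)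
      (fun x hx => (hG x hx).continuousAt.continuousWithinAt)
      (fun x hx => (hG x (by simpa using hx)).differentiableAt.differentiableWithinAt) ?_
    intro x hx
    have hx' : 0 < x := by simpa using hx
    rw [(hG x hx').deriv]
    have := hhpos x hx'
    positivity
  have hHG : ∀ x, H x = x * G x := hH
  set P : ℝ → ℝ := fun x => G x + h x / x with hPdef
  have hHd : ∀ x : ℝ, 0 < x → HasDerivAt H (P x) x := fun x hx => by
    have h1 := (hasDerivAt_id x).mul (hG x hx)
    have h2 : H = id * G := by ext y; simp [hHG]
    rw [h2]
    refine h1.congr_deriv ?_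
    simp only [hPdef, id]
    field_simp
  have hPd : ∀ x : ℝ, 0 < x → HasDerivAt P (deriv h x / x) x := fun x hx => by
    have h1 := (hG x hx).add ((hder x hx).div (hasDerivAt_id x) hx.ne')
    refine h1.congr_deriv ?_
    simp only [id]
    field_simp
    ring
  have hPmono : MonotoneOn P (Ioi 0) := by
    refine monotoneOn_of_deriv_nonneg (convex_Ioi 0)
      (fun x hx => (hPd x hx).continuousAt.continuousWithinAt)
      (fun x hx => (hPd x (by simpa using hx)).differentiableAt.differentiableWithinAt) ?_
    intro x hx
    have hx' : 0 < x := by simpa using hx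
    rw [(hPd x hx').deriv]
    exact (div_pos (hpos x hx') hx').le
  obtain ⟨α, β, hα, hKI, hqα, hqβ⟩ : ∃ α β : ℝ, 0 < α ∧ K ⊆ Icc α β ∧
      (∀ x ≤ α, q x = 0) ∧ (∀ x, β ≤ x → q x = 0) := by
    have hS : IsCompact (insert (1:ℝ) (K ∪ tsupport q)) := (hK.union hqsupp).insert 1
    obtain ⟨m, hm, hmle⟩ := hS.exists_isLeast (insert_nonempty _ _)
    obtain ⟨M, hM, hMge⟩ := hS.exists_isGreatest (insert_nonempty _ _)
    have hmpos : 0 < m := by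
      rcases hm with rfl | hm | hm
      · exact one_pos
      · exact hKsub hm
      · exact hqsub hm
    refine ⟨m / 2, M + 1, by linarith, fun x hx => ?_, fun x hx => ?_, fun x hx => ?_⟩
    · have h1 := hmle (Or.inr (Or.inl hx))
      have h2 := hMge (Or.inr (Or.inl hx))
      exact ⟨by linarith, by linarith⟩
    · refine image_eq_zero_of_notMem_tsupport fun hx' => ?_
      have h1 := hmle (Or.inr (Or.inr hx'))
      linarith
    · refine image_eq_zero_of_notMem_tsupport fun hx' => ?_
      have h1 := hMge (Or.inr (Or.inr hx'))
      linarith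
  rcases K.eq_empty_or_nonempty with rfl | ⟨k, hk⟩
  · exact ⟨1, one_pos, by simp⟩
  have hαβ : α ≤ β := (hKI hk).1.trans (hKI hk).2
  have hIsub : Icc α β ⊆ Ioi 0 := fun x hx => hα.trans_le hx.1
  obtain ⟨c, hc, hcle⟩ : ∃ c : ℝ, 0 < c ∧ ∀ x ∈ Icc α β, c ≤ deriv h x / x := by
    obtain ⟨x₀, hx₀, hmin⟩ := (isCompact_Icc (a := α) (b := β)).exists_isMinOn
      (nonempty_Icc.2 hαβ) ((hdcont.mono hIsub).div continuousOn_id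
        (fun x hx => (hIsub hx).ne'))
    exact ⟨_, div_pos (hpos _ (hIsub hx₀)) (hIsub hx₀), fun x hx => hmin hx⟩
  obtain ⟨L, hL⟩ := hqC1.lipschitzWith_of_hasCompactSupport hqsupp one_ne_zero
  have hPcmono : MonotoneOn (fun x => P x - c * x) (Icc α β) := by
    have hd : ∀ x ∈ Icc α β, HasDerivAt (fun x => P x - c * x) (deriv h x / x - c) x :=
      fun x hx => by
        exact ((hPd x (hIsub hx)).sub ((hasDerivAt_id x).const_mul c)).congr_deriv (by simp)
    refine monotoneOn_of_deriv_nonneg (convex_Icc _ _)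
      (fun x hx => (hd x hx).continuousAt.continuousWithinAt)
      (fun x hx => (hd x (interior_subset hx)).differentiableAt.differentiableWithinAt) ?_
    intro x hx
    rw [(hd x (interior_subset hx)).deriv]
    linarith [hcle x (interior_subset hx)]
  -- Convexity of `H - c/2 ρ²` on `[α, β]` is the quadratic lower bound on the relative energy.
  have hquad : ∀ r ∈ Icc α β, ∀ ρ ∈ Icc α β,
      c / 2 * (ρ - r) ^ 2 ≤ H ρ - H r - P r * (ρ - r) := fun r hr ρ hρ => by
    have := tangent_le (fun x => H x - c / 2 * x ^ 2) (fun x => P x - c * x) (Icc α β)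
      ordConnected_Icc (fun x hx => by
        have h1 := (hHd x (hIsub hx)).sub (((hasDerivAt_id x).pow 2).const_mul (c / 2))
        refine h1.congr_deriv ?_
        simp
        ring) hPcmono hr hρ
    nlinarith
  set C : ℝ := 2 * ((L : ℝ) ^ 2 + 1) / c with hCdef
  have hC : 0 < C := by positivity
  have hmain : ∀ r ∈ Icc α β, ∀ ρ ∈ Icc α β,
      (q ρ - q r) ^ 2 ≤ C * (H ρ - H r - P r * (ρ - r)) := fun r hr ρ hρ => by
    have h1 : |q ρ - q r| ≤ L * |ρ - r| := by
      simpa [Real.dist_eq] using hL.dist_le_mul ρ r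
    calc (q ρ - q r) ^ 2 = |q ρ - q r| ^ 2 := (sq_abs _).symm
      _ ≤ (L * |ρ - r|) ^ 2 := by gcongr
      _ = (L : ℝ) ^ 2 * (ρ - r) ^ 2 := by rw [mul_pow, sq_abs]
      _ ≤ ((L : ℝ) ^ 2 + 1) * (ρ - r) ^ 2 := by gcongr; linarith
      _ = C * (c / 2 * (ρ - r) ^ 2) := by rw [hCdef]; field_simp
      _ ≤ _ := mul_le_mul_of_nonneg_left (hquad r hr ρ hρ) hC.le
  refine ⟨C, hC, fun r hrK ρ hρ => ?_⟩
  have hr := hKI hrK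
  have hr0 : 0 < r := hIsub hr
  have hβ0 : 0 < β := hα.trans_le hαβ
  rw [(hHd r hr0).deriv]
  rcases lt_or_ge ρ α with hlt | hge
  · have hαI : α ∈ Icc α β := ⟨le_rfl, hαβ⟩
    have h1 := hmain r hr α hαI
    rw [hqα α le_rfl] at h1
    rw [hqα ρ hlt.le]
    refine h1.trans (mul_le_mul_of_nonneg_left ?_ hC.le)
    rcases hρ.eq_or_lt with rfl | hρ0
    · -- Here the claim reduces to `G α ≤ G r + h r / r`.
      have h2 : G α ≤ P r := by
        have h3 := hGmono (mem_Ioi.2 hα) (mem_Ioi.2 hr0) hr.1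
        have h4 := div_pos (hhpos r hr0) hr0
        simp only [hPdef]
        linarith
      rw [hHG α, hHG 0]
      nlinarith
    · have h2 := tangent_le H P (Ioi 0) ordConnected_Ioi hHd hPmono (mem_Ioi.2 hα)
        (mem_Ioi.2 hρ0)
      have h3 := hPmono (mem_Ioi.2 hα) (mem_Ioi.2 hr0) hr.1
      nlinarith
  · rcases le_or_gt ρ β with hle | hgt
    · exact hmain r hr ρ ⟨hge, hle⟩
    · have h1 := hmain r hr β ⟨hαβ, le_rfl⟩
      rw [hqβ β le_rfl] at h1
      rw [hqβ ρ hgt.le]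
      refine h1.trans (mul_le_mul_of_nonneg_left ?_ hC.le)
      have h2 := tangent_le H P (Ioi 0) ordConnected_Ioi hHd hPmono (mem_Ioi.2 hβ0)
        (mem_Ioi.2 (hβ0.trans hgt))
      have h3 := hPmono (mem_Ioi.2 hr0) (mem_Ioi.2 hβ0) hr.2
      nlinarith
end

section
/- Let h : [0,∞) → ℝ be continuously differentiable with h(0)=0, h'(ρ)>0 for ρ>0, and lim_{ρ→∞} h'(ρ)/ρ^{γ−1} = a for some constants a > 0 and γ ≥ 2, set H(ρ) = ρ ∫₁^ρ h(z)/z² dz for ρ > 0, H(0)=0, and let q : [0,∞) → ℝ be globally Lipschitz continuous. Then for every compact set K ⊂ (0,∞) there exists a constant C > 0 such that for all r ∈ K and all ρ ≥ 0: (q(ρ) − q(r))² ≤ C·(H(ρ) − H(r) − H'(r)(ρ − r)). -/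
/-!
Write `G ρ = ∫ z in 1..ρ, h z / z ^ 2`, so `H ρ = ρ * G ρ` and `H' r = G r + h r / r` for `r > 0`.
The relative energy `E(ρ|r)` then equals `ρ * (G ρ - G r) - (h r / r) * (ρ - r)`; for `ρ > 0` this
is `ρ * ∫ z in r..ρ, (h z - h r) / z ^ 2`, and `E(0|r) = h r`.

Hence a quadratic lower bound `c * (ρ - r) ^ 2 ≤ E(ρ|r)` follows from comparing `h z - h r` with
`c * (z ^ 2 - r ^ 2)`, because `c * (ρ - r) ^ 2` is the relative energy attached to `h z = c * z ^ 2`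
(`relEnergy_lower`). The comparison is uniform in `r ≥ 2 * δ > 0` (`h_compare`): the positivity of
`h'` on compact sets and its growth at infinity (this is where `γ ≥ 2` enters) give `h' z ≥ 2 * c * z`
for all `z ≥ δ` (`deriv_lower`). For `z < δ`, where `h' z / z` may degenerate, monotonicity of `h`
suffices because `z` stays away from `r`. The Lipschitz bound on `q` concludes.
-/

open Set Filter MeasureTheory Topology

lemma deriv_lower (h : ℝ → ℝ) (hC1 : ContDiffOn ℝ 1 h (Set.Ici 0))
    (hpos : ∀ ρ : ℝ, 0 < ρ → 0 < deriv h ρ)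
    (a γ : ℝ) (ha : 0 < a) (hγ : 2 ≤ γ)
    (hlim : Filter.Tendsto (fun ρ : ℝ => deriv h ρ / ρ ^ (γ - 1)) Filter.atTop (nhds a))
    (δ : ℝ) (hδ : 0 < δ) :
    ∃ c : ℝ, 0 < c ∧ ∀ z, δ ≤ z → 2 * c * z ≤ deriv h z := by
  have hcont : ContinuousOn (deriv h) (Ioi 0) :=
    (hC1.mono Ioi_subset_Ici_self).continuousOn_deriv_of_isOpen isOpen_Ioi le_rfl
  obtain ⟨R, hR⟩ := eventually_atTop.1 (hlim.eventually (lt_mem_nhds (half_lt_self ha)))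
  set M := max (max R 1) δ with hM
  have hMR : R ≤ M := (le_max_left _ _).trans (le_max_left _ _)
  have hM1 : 1 ≤ M := (le_max_right _ _).trans (le_max_left _ _)
  have hMδ : δ ≤ M := le_max_right _ _
  have hc2 : ContinuousOn (fun z => deriv h z / z) (Icc δ M) := by
    refine (hcont.mono fun z hz => ?_).div continuousOn_id fun z hz => ?_
    · exact hδ.trans_le hz.1
    · exact (hδ.trans_le hz.1).ne'
  obtain ⟨m, hm, hmin⟩ := isCompact_Icc.exists_isMinOn (nonempty_Icc.2 hMδ) hc2
  have hm0 : 0 < m := hδ.trans_le hm.1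
  have hv : 0 < deriv h m / m := div_pos (hpos m hm0) hm0
  refine ⟨min (deriv h m / m) (a / 2) / 2, by positivity, fun z hz => ?_⟩
  have hz0 : 0 < z := hδ.trans_le hz
  rw [show 2 * (min (deriv h m / m) (a / 2) / 2) * z = min (deriv h m / m) (a / 2) * z by ring]
  rcases le_total z M with hzM | hzM
  · have h1 : deriv h m / m ≤ deriv h z / z := hmin ⟨hz, hzM⟩
    rw [← le_div_iff₀ hz0]
    exact (min_le_left _ _).trans h1
  · have h1 : a / 2 < deriv h z / z ^ (γ - 1) := hR z (hMR.trans hzM)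
    have h2 : z ≤ z ^ (γ - 1) := by
      simpa using Real.rpow_le_rpow_of_exponent_le (hM1.trans hzM) (by linarith : 1 ≤ γ - 1)
    rw [lt_div_iff₀ (by positivity)] at h1
    calc min (deriv h m / m) (a / 2) * z ≤ a / 2 * z := by gcongr; exact min_le_right _ _
      _ ≤ a / 2 * z ^ (γ - 1) := by gcongr
      _ ≤ _ := h1.le

/-- The factor `3 / 4` covers `z < δ`: there `r ^ 2 - δ ^ 2 ≥ (3 / 4) * r ^ 2`. -/
lemma h_compare (h : ℝ → ℝ) (hC1 : ContDiffOn ℝ 1 h (Set.Ici 0))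
    (hpos : ∀ ρ : ℝ, 0 < ρ → 0 < deriv h ρ) (δ c : ℝ) (hδ : 0 < δ) (hc : 0 < c)
    (hlow : ∀ z, δ ≤ z → 2 * c * z ≤ deriv h z) (r : ℝ) (hr : 2 * δ ≤ r) :
    (∀ z, r ≤ z → 3 / 4 * c * (z ^ 2 - r ^ 2) ≤ h z - h r) ∧
    (∀ z, 0 ≤ z → z ≤ r → 3 / 4 * c * (r ^ 2 - z ^ 2) ≤ h r - h z) := by
  have hd : ∀ z, 0 < z → DifferentiableAt ℝ h z := fun z hz =>
    (hC1.differentiableOn one_ne_zero).differentiableAt (Ici_mem_nhds hz)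
  have hmono : MonotoneOn h (Ici 0) := by
    refine monotoneOn_of_deriv_nonneg (convex_Ici 0) hC1.continuousOn ?_ ?_
    · rw [interior_Ici]; exact fun z hz => (hd z hz).differentiableWithinAt
    · rw [interior_Ici]; exact fun z hz => (hpos z hz).le
  have hmono2 : MonotoneOn (fun z => h z - c * z ^ 2) (Ici δ) := by
    have hder : ∀ z, δ ≤ z →
        HasDerivAt (fun z => h z - c * z ^ 2) (deriv h z - 2 * c * z) z := by
      intro z hz
      refine ((hd z (hδ.trans_le hz)).hasDerivAt.sub
        ((hasDerivAt_pow 2 z).const_mul c)).congr_deriv ?_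
      norm_num
      ring
    refine monotoneOn_of_deriv_nonneg (convex_Ici δ)
      (fun z hz => (hder z hz).continuousAt.continuousWithinAt) ?_ ?_
    · exact fun z hz => (hder z (interior_subset hz)).differentiableAt.differentiableWithinAt
    · intro z hz
      rw [(hder z (interior_subset hz)).deriv]
      linarith [hlow z (interior_subset hz)]
  have hδr : δ ≤ r := by linarith
  refine ⟨fun z hz => ?_, fun z hz0 hz => ?_⟩
  · have h1 := hmono2 (mem_Ici.2 hδr) (mem_Ici.2 (hδr.trans hz)) hz
    have h2 : 0 ≤ c * (z ^ 2 - r ^ 2) := mul_nonneg hc.le (by nlinarith)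
    simp only at h1
    nlinarith
  · rcases le_total δ z with hzδ | hzδ
    · have h1 := hmono2 (mem_Ici.2 hzδ) (mem_Ici.2 hδr) hz
      have h2 : 0 ≤ c * (r ^ 2 - z ^ 2) := mul_nonneg hc.le (by nlinarith)
      simp only at h1
      nlinarith
    · have h1 := hmono2 (mem_Ici.2 le_rfl) (mem_Ici.2 hδr) hδr
      have h3 := hmono (mem_Ici.2 hz0) (mem_Ici.2 hδ.le) hzδ
      have h2 : 0 ≤ c * (r ^ 2 - δ ^ 2 - 3 / 4 * (r ^ 2 - z ^ 2)) :=
        mul_nonneg hc.le (by nlinarith)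
      simp only at h1
      nlinarith

lemma hasDerivAt_potential (h : ℝ → ℝ) (hcont : ContinuousOn h (Ioi 0)) (ρ : ℝ) (hρ : 0 < ρ) :
    HasDerivAt (fun x => ∫ z in (1:ℝ)..x, h z / z ^ 2) (h ρ / ρ ^ 2) ρ := by
  have hc : ContinuousOn (fun z => h z / z ^ 2) (Ioi 0) :=
    hcont.div (by fun_prop) fun z hz => pow_ne_zero 2 (ne_of_gt hz)
  refine intervalIntegral.integral_hasDerivAt_right ?_ ?_ (hc.continuousAt (Ioi_mem_nhds hρ))
  · refine (hc.mono fun z hz => ?_).intervalIntegrable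
    exact (lt_min one_pos hρ).trans_le hz.1
  · exact hc.stronglyMeasurableAtFilter isOpen_Ioi ρ hρ

/-- If `h` grows away from `r` at least as fast as `z ↦ c * z ^ 2`, then its relative energy
dominates that of `z ↦ c * z ^ 2`, which is `c * (ρ - r) ^ 2`. -/
lemma relEnergy_lower (h : ℝ → ℝ) (hcont : ContinuousOn h (Ioi 0)) (h0 : h 0 = 0)
    (H : ℝ → ℝ) (hH : ∀ ρ : ℝ, H ρ = ρ * ∫ z in (1:ℝ)..ρ, h z / z ^ 2)
    (r c : ℝ) (hr : 0 < r)
    (hup : ∀ z, r ≤ z → c * (z ^ 2 - r ^ 2) ≤ h z - h r)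
    (hdown : ∀ z, 0 ≤ z → z ≤ r → c * (r ^ 2 - z ^ 2) ≤ h r - h z) (ρ : ℝ) (hρ : 0 ≤ ρ) :
    c * (ρ - r) ^ 2 ≤ H ρ - H r - deriv H r * (ρ - r) := by
  set G : ℝ → ℝ := fun x => ∫ z in (1:ℝ)..x, h z / z ^ 2 with hG
  have hGd : ∀ x, 0 < x → HasDerivAt G (h x / x ^ 2) x :=
    fun x hx => hasDerivAt_potential h hcont x hx
  have hHG : H = fun x => x * G x := funext hH
  have hHd : deriv H r = G r + h r / r := by
    rw [hHG]
    have h1 : HasDerivAt (fun x => x * G x) (1 * G r + r * (h r / r ^ 2)) r :=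
      (hasDerivAt_id' r).mul (hGd r hr)
    rw [h1.deriv]
    field_simp
  rw [hHd, hHG]
  rcases hρ.eq_or_lt with rfl | hρ
  · have h1 := hdown 0 le_rfl hr.le
    rw [h0] at h1
    have h2 : h r / r * r = h r := div_mul_cancel₀ _ hr.ne'
    simp only
    nlinarith
  -- `ρ * (Ψ ρ - Ψ r)` is `E(ρ|r) - c * (ρ - r) ^ 2`, and `Ψ` is minimal at `r`.
  set Ψ : ℝ → ℝ := fun x => G x + h r * x⁻¹ - c * (x + r ^ 2 * x⁻¹) with hΨ
  have hΨd : ∀ x, 0 < x →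
      HasDerivAt Ψ ((h x - h r - c * (x ^ 2 - r ^ 2)) / x ^ 2) x := by
    intro x hx
    have hi := hasDerivAt_inv hx.ne'
    refine (((hGd x hx).add (hi.const_mul (h r))).sub
      (((hasDerivAt_id' x).add (hi.const_mul (r ^ 2))).const_mul c)).congr_deriv ?_
    field_simp
    ring
  have hmin : Ψ r ≤ Ψ ρ := by
    rcases le_total r ρ with hle | hle
    · refine monotoneOn_of_deriv_nonneg (convex_Ici r)
        (fun z hz => (hΨd z (hr.trans_le hz)).continuousAt.continuousWithinAt)
        (fun z hz => (hΨd z (hr.trans_le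
          (interior_subset hz))).differentiableAt.differentiableWithinAt)
        (fun z hz => ?_) (mem_Ici.2 le_rfl) (mem_Ici.2 hle) hle
      have hz' : r ≤ z := interior_subset hz
      rw [(hΨd z (hr.trans_le hz')).deriv]
      exact div_nonneg (by linarith [hup z hz']) (sq_nonneg z)
    · refine antitoneOn_of_deriv_nonpos (convex_Icc ρ r)
        (fun z hz => (hΨd z (hρ.trans_le hz.1)).continuousAt.continuousWithinAt)
        (fun z hz => (hΨd z (hρ.trans_le
          (interior_subset hz).1)).differentiableAt.differentiableWithinAt)
        (fun z hz => ?_) (left_mem_Icc.2 hle) (right_mem_Icc.2 hle) hle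
      have hz' : z ∈ Icc ρ r := interior_subset hz
      have hz0 : 0 < z := hρ.trans_le hz'.1
      rw [(hΨd z hz0).deriv]
      exact div_nonpos_of_nonpos_of_nonneg (by linarith [hdown z hz0.le hz'.2]) (sq_nonneg z)
  have hprod : 0 ≤ ρ * (Ψ ρ - Ψ r) := mul_nonneg hρ.le (sub_nonneg.2 hmin)
  have hid : ρ * (Ψ ρ - Ψ r) =
      ρ * G ρ - r * G r - (G r + h r / r) * (ρ - r) - c * (ρ - r) ^ 2 := by
    simp only [hΨ]
    field_simp
    ring
  simp only
  linarith

/-- With `h` C¹, `h 0 = 0`, `h' > 0` on `(0,∞)`, `h' ρ / ρ^(γ-1) → a > 0`,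
`γ ≥ 2`, `H` the pressure potential, and `q` globally Lipschitz, for every compact
`K ⊆ (0,∞)` there is `C > 0` with `(q ρ - q r)² ≤ C (H ρ - H r - H' r (ρ - r))`
for all `r ∈ K`, `ρ ≥ 0`. -/
theorem stmt11 (h : ℝ → ℝ) (hC1 : ContDiffOn ℝ 1 h (Set.Ici 0)) (h0 : h 0 = 0)
    (hpos : ∀ ρ : ℝ, 0 < ρ → 0 < deriv h ρ)
    (a γ : ℝ) (ha : 0 < a) (hγ : 2 ≤ γ)
    (hlim : Filter.Tendsto (fun ρ : ℝ => deriv h ρ / ρ ^ (γ - 1)) Filter.atTop (nhds a))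
    (H : ℝ → ℝ) (hH : ∀ ρ : ℝ, H ρ = ρ * ∫ z in (1:ℝ)..ρ, h z / z ^ 2)
    (q : ℝ → ℝ) (L : NNReal) (hq : LipschitzWith L q)
    (K : Set ℝ) (hK : IsCompact K) (hKsub : K ⊆ Set.Ioi 0) :
    ∃ C : ℝ, 0 < C ∧ ∀ r ∈ K, ∀ ρ : ℝ, 0 ≤ ρ →
      (q ρ - q r) ^ 2 ≤ C * (H ρ - H r - deriv H r * (ρ - r)) := by
  obtain ⟨δ, hδ, hδK⟩ : ∃ δ : ℝ, 0 < δ ∧ ∀ r ∈ K, 2 * δ ≤ r := by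
    rcases K.eq_empty_or_nonempty with rfl | hne
    · exact ⟨1, one_pos, by simp⟩
    · obtain ⟨m, hm, hml⟩ := hK.exists_isLeast hne
      have hm0 : 0 < m := hKsub hm
      exact ⟨m / 2, by positivity, fun r hr => by linarith [hml hr]⟩
  obtain ⟨c, hc, hlow⟩ := deriv_lower h hC1 hpos a γ ha hγ hlim δ hδ
  have hcont : ContinuousOn h (Ioi 0) := hC1.continuousOn.mono Ioi_subset_Ici_self
  -- The summand `1` keeps the constant positive when `L = 0`.
  refine ⟨((L : ℝ) ^ 2 + 1) / (3 / 4 * c), by positivity, fun r hr ρ hρ => ?_⟩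
  obtain ⟨hup, hdown⟩ := h_compare h hC1 hpos δ c hδ hc hlow r (hδK r hr)
  have hE := relEnergy_lower h hcont h0 H hH r (3 / 4 * c) (hKsub hr) hup hdown ρ hρ
  have hL : |q ρ - q r| ≤ L * |ρ - r| := by
    simpa [Real.dist_eq] using hq.dist_le_mul ρ r
  calc (q ρ - q r) ^ 2 = |q ρ - q r| ^ 2 := (sq_abs _).symm
    _ ≤ (L * |ρ - r|) ^ 2 := by gcongr
    _ = (L : ℝ) ^ 2 * (ρ - r) ^ 2 := by rw [mul_pow, sq_abs]
    _ ≤ ((L : ℝ) ^ 2 + 1) * (ρ - r) ^ 2 := by gcongr; linarith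
    _ = ((L : ℝ) ^ 2 + 1) / (3 / 4 * c) * (3 / 4 * c * (ρ - r) ^ 2) := by field_simp
    _ ≤ _ := by gcongr
end
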